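/- arXiv:2212.14579 — 2 statements merged into one kernel-verified Lean document; each statement's English description precedes it below -/
import Mathlib

section
/- Suppose f is holomorphic on a bounded domain Ω ⊂ ℂⁿ and omits the values 0 and 1. If a ∈ Ω and |f(a)| < M, then for every sufficiently small ε > 0 there is a constant C > 0, depending only on Ω, a, M, and ε (but not on f), such that |f(z)| < C for all z ∈ Ω with dist(z, ∂Ω) ≥ ε. -/
open Metric

/-!
On a disc, a function `f` omitting `0` and `1` lifts to `f = exp (2πi cosh² h)`. Every ball of
radius `3` contains a point where `cosh²` is an integer, and `h` has to omit that point because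
`f ≠ 1`. Bloch's theorem therefore bounds the derivative of `h` by a universal constant over the
radius of the disc, which bounds `f` in terms of its value at the center. Slicing by complex lines
carries this bound from discs to balls. Boundedness then spreads from `a` through the connected
set `Ω`, and covering by balls gives the bound on compact subsets.
-/

open scoped Real Topology

section UniformlyBoundedOn

variable {E F : Type*} [SeminormedAddCommGroup F]

/-- The family of functions `𝓕` is bounded on `U` by a constant that does not depend on the member
of the family. Only the values on `U` matter. -/
def UniformlyBoundedOn (𝓕 : Set (E → F)) (U : Set E) : Prop :=
  ∃ C : ℝ, ∀ f ∈ 𝓕, ∀ z ∈ U, ‖f z‖ ≤ C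

namespace UniformlyBoundedOn

variable {𝓕 : Set (E → F)} {U V K : Set E}

theorem empty : UniformlyBoundedOn 𝓕 ∅ :=
  ⟨0, fun _ _ _ hz => hz.elim⟩

theorem mono (hUV : U ⊆ V) (h : UniformlyBoundedOn 𝓕 V) : UniformlyBoundedOn 𝓕 U :=
  let ⟨C, hC⟩ := h
  ⟨C, fun f hf z hz => hC f hf z (hUV hz)⟩

theorem union (hU : UniformlyBoundedOn 𝓕 U) (hV : UniformlyBoundedOn 𝓕 V) :
    UniformlyBoundedOn 𝓕 (U ∪ V) := by
  obtain ⟨A, hA⟩ := hU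
  obtain ⟨B, hB⟩ := hV
  refine ⟨max A B, fun f hf z hz => ?_⟩
  rcases hz with hz | hz
  · exact (hA f hf z hz).trans (le_max_left A B)
  · exact (hB f hf z hz).trans (le_max_right A B)

theorem of_isCompact [TopologicalSpace E] (hK : IsCompact K)
    (h : ∀ z ∈ K, ∃ U ∈ 𝓝 z, UniformlyBoundedOn 𝓕 U) : UniformlyBoundedOn 𝓕 K := by
  refine hK.induction_on empty (fun _ _ => mono) (fun _ _ => union) fun z hz => ?_
  obtain ⟨U, hU, hbdd⟩ := h z hz
  exact ⟨U, mem_nhdsWithin_of_mem_nhds hU, hbdd⟩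

theorem exists_pos_forall_norm_lt (h : UniformlyBoundedOn 𝓕 U) :
    ∃ C > 0, ∀ f ∈ 𝓕, ∀ z ∈ U, ‖f z‖ < C := by
  obtain ⟨C, hC⟩ := h
  refine ⟨|C| + 1, by positivity, fun f hf z hz => ?_⟩
  linarith [hC f hf z hz, le_abs_self C]

variable [PseudoMetricSpace E] {Ω : Set E} {a : E}

/-- The hypothesis `hprop` is a Harnack-type property of `𝓕`. Since it applies to all balls in `Ω`,
it also carries boundedness from points of a small ball back to its center. -/
theorem singleton_of_isPreconnected (hΩ : IsOpen Ω) (hconn : IsPreconnected Ω)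
    (hprop : ∀ c, ∀ R > 0, ball c R ⊆ Ω → UniformlyBoundedOn 𝓕 {c} →
      UniformlyBoundedOn 𝓕 (closedBall c (R / 2)))
    (ha : a ∈ Ω) (hbdd : UniformlyBoundedOn 𝓕 {a}) {z : E} (hz : z ∈ Ω) :
    UniformlyBoundedOn 𝓕 {z} := by
  refine hconn.induction₂'
    (fun x y => UniformlyBoundedOn 𝓕 {x} → UniformlyBoundedOn 𝓕 {y}) (fun x hx => ?_)
    (fun _ _ _ _ _ _ hxy hyw => hyw ∘ hxy) ha hz hbdd
  obtain ⟨R, hR, hball⟩ := isOpen_iff.1 hΩ x hx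
  filter_upwards [mem_nhdsWithin_of_mem_nhds (ball_mem_nhds x (by positivity : 0 < R / 4))]
    with y hy
  rw [mem_ball] at hy
  have hyball : ball y (R / 2) ⊆ Ω := (ball_subset_ball' (by linarith)).trans hball
  have hyx : y ∈ closedBall x (R / 2) := mem_closedBall.2 (by linarith)
  have hxy : x ∈ closedBall y (R / 2 / 2) := mem_closedBall'.2 (by linarith)
  exact ⟨fun h => (hprop x R hR hball h).mono (Set.singleton_subset_iff.2 hyx),
    fun h => (hprop y (R / 2) (by positivity) hyball h).mono (Set.singleton_subset_iff.2 hxy)⟩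

theorem of_isPreconnected_of_isCompact (hΩ : IsOpen Ω) (hconn : IsPreconnected Ω)
    (hprop : ∀ c, ∀ R > 0, ball c R ⊆ Ω → UniformlyBoundedOn 𝓕 {c} →
      UniformlyBoundedOn 𝓕 (closedBall c (R / 2)))
    (ha : a ∈ Ω) (hbdd : UniformlyBoundedOn 𝓕 {a}) (hK : IsCompact K) (hKΩ : K ⊆ Ω) :
    UniformlyBoundedOn 𝓕 K := by
  refine of_isCompact hK fun z hz => ?_
  obtain ⟨R, hR, hball⟩ := isOpen_iff.1 hΩ z (hKΩ hz)
  exact ⟨closedBall z (R / 2), closedBall_mem_nhds z (by positivity),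
    hprop z R hR hball (singleton_of_isPreconnected hΩ hconn hprop ha hbdd (hKΩ hz))⟩

end UniformlyBoundedOn

end UniformlyBoundedOn

section Bloch

theorem exists_ball_forall_le_two_mul {X : Type*} [PseudoMetricSpace X] [ProperSpace X]
    {φ : X → ℝ} {c : X} {r : ℝ} (hr : 0 < r) (hφ : ContinuousOn φ (closedBall c r))
    (hc : 0 < φ c) :
    ∃ p, ∃ t > 0, ball p t ⊆ ball c r ∧ φ c * r ≤ 2 * (φ p * t) ∧
      ∀ z ∈ ball p t, φ z ≤ 2 * φ p := by
  obtain ⟨p, hp, hmax⟩ := (isCompact_closedBall c r).exists_isMaxOn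
    (f := fun z => φ z * (r - dist z c)) ⟨c, mem_closedBall_self hr.le⟩ (hφ.mul (by fun_prop))
  have hmax : ∀ z ∈ closedBall c r, φ z * (r - dist z c) ≤ φ p * (r - dist p c) := hmax
  rw [mem_closedBall] at hp
  have hcp : φ c * r ≤ φ p * (r - dist p c) := by
    simpa using hmax c (mem_closedBall_self hr.le)
  obtain ⟨hφp, hrp⟩ : 0 < φ p ∧ 0 < r - dist p c :=
    (pos_and_pos_or_neg_and_neg_of_mul_pos ((mul_pos hc hr).trans_le hcp)).resolve_right
      fun h => by linarith [h.2]
  refine ⟨p, (r - dist p c) / 2, half_pos hrp, ball_subset_ball' (by linarith), by linarith,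
    fun z hz => ?_⟩
  have hzc : (r - dist p c) / 2 ≤ r - dist z c := by
    linarith [dist_triangle z p c, mem_ball.1 hz]
  rcases le_or_gt (φ z) 0 with hφz | hφz
  · linarith
  refine le_of_mul_le_mul_right ?_ (half_pos hrp)
  calc φ z * ((r - dist p c) / 2) ≤ φ z * (r - dist z c) := by gcongr
    _ ≤ φ p * (r - dist p c) := hmax z (mem_closedBall.2 (by linarith))
    _ = 2 * φ p * ((r - dist p c) / 2) := by ring

variable {h : ℂ → ℂ} {c p z : ℂ} {B R t ρ : ℝ}

theorem norm_sub_sub_deriv_mul_le_of_forall_norm_deriv_sub_le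
    (hh : DifferentiableOn ℂ h (ball p t))
    (hB : ∀ z ∈ ball p t, ‖deriv h z - deriv h p‖ ≤ B) (hz : z ∈ ball p t) :
    ‖h z - h p - deriv h p * (z - p)‖ ≤ B / t * ‖z - p‖ ^ 2 := by
  have hsub : closedBall p ‖z - p‖ ⊆ ball p t :=
    closedBall_subset_ball (mem_ball_iff_norm.1 hz)
  have hB0 : 0 ≤ B := (norm_nonneg _).trans (hB z hz)
  have ht : 0 < t := pos_of_mem_ball hz
  have hderiv : ∀ w ∈ closedBall p ‖z - p‖, HasDerivWithinAt (fun w => h w - deriv h p * w)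
      (deriv h w - deriv h p) (closedBall p ‖z - p‖) w := fun w hw => by
    have hw := (hh.differentiableAt (isOpen_ball.mem_nhds (hsub hw))).hasDerivAt
    simpa using (hw.fun_sub ((hasDerivAt_id w).const_mul (deriv h p))).hasDerivWithinAt
  have hschwarz : ∀ w ∈ closedBall p ‖z - p‖, ‖deriv h w - deriv h p‖ ≤ B / t * ‖z - p‖ :=
    fun w hw => calc
      ‖deriv h w - deriv h p‖ = dist (deriv h w) (deriv h p) := (dist_eq_norm _ _).symm
      _ ≤ B / t * dist w p := Complex.dist_le_div_mul_dist_of_mapsTo_ball (hh.deriv isOpen_ball)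
          (fun x hx => mem_closedBall_iff_norm.2 (hB x hx)) (hsub hw)
      _ ≤ B / t * ‖z - p‖ := by gcongr; exact hw
  calc ‖h z - h p - deriv h p * (z - p)‖
      = ‖(h z - deriv h p * z) - (h p - deriv h p * p)‖ := by ring_nf
    _ ≤ B / t * ‖z - p‖ * ‖z - p‖ :=
        (convex_closedBall p _).norm_image_sub_le_of_norm_hasDerivWithin_le hderiv hschwarz
          (mem_closedBall_self (norm_nonneg _)) (mem_closedBall_iff_norm.2 le_rfl)
    _ = B / t * ‖z - p‖ ^ 2 := by ring

theorem ball_subset_image_ball_of_forall_norm_deriv_le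
    (hh : DifferentiableOn ℂ h (ball p t))
    (hderiv : ∀ z ∈ ball p t, ‖deriv h z‖ ≤ 2 * ‖deriv h p‖) :
    ball (h p) (‖deriv h p‖ * t / 24) ⊆ h '' ball p t := by
  intro v hv
  have hA : 0 < ‖deriv h p‖ := (norm_nonneg _).lt_of_ne fun hA => by
    simp [← hA] at hv
  have ht : 0 < t := pos_of_mul_pos_right (by linarith [pos_of_mem_ball hv]) hA.le
  have hsub : closedBall p (t / 6) ⊆ ball p t := closedBall_subset_ball (by linarith)
  have hne : ∃ᶠ z in 𝓝 p, h z ≠ h p :=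
    (((hh.differentiableAt (ball_mem_nhds p ht)).hasDerivAt.eventually_ne
      (norm_pos_iff.1 hA)).frequently).filter_mono nhdsWithin_le_nhds
  have hlin : ∀ z ∈ ball p t,
      ‖h z - h p - deriv h p * (z - p)‖ ≤ 3 * ‖deriv h p‖ / t * ‖z - p‖ ^ 2 := fun z hz =>
    norm_sub_sub_deriv_mul_le_of_forall_norm_deriv_sub_le hh
      (fun w hw => by linarith [norm_sub_le (deriv h w) (deriv h p), hderiv w hw]) hz
  have hsphere : ∀ z ∈ sphere p (t / 6), ‖deriv h p‖ * t / 12 ≤ ‖h z - h p‖ := fun z hz => by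
    have hzp : ‖z - p‖ = t / 6 := mem_sphere_iff_norm.1 hz
    have hquad := hlin z (hsub (sphere_subset_closedBall hz))
    have hmain := norm_sub_norm_le (deriv h p * (z - p)) (h z - h p)
    rw [norm_sub_rev (deriv h p * _), norm_mul, hzp] at hmain
    rw [hzp, show 3 * ‖deriv h p‖ / t * (t / 6) ^ 2 = ‖deriv h p‖ * t / 12 by
      field_simp; norm_num] at hquad
    linarith
  refine Set.image_mono hsub (DiffContOnCl.ball_subset_image_closedBall
    ((hh.mono hsub).diffContOnCl_ball subset_rfl) (by positivity) hsphere hne ?_)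
  rwa [show ‖deriv h p‖ * t / 12 / 2 = ‖deriv h p‖ * t / 24 by ring]

/-- **Bloch's theorem**, with a nonoptimal constant. -/
theorem exists_ball_subset_image_ball (hh : DifferentiableOn ℂ h (ball c R)) :
    ∃ w, ball w (‖deriv h c‖ * R / 96) ⊆ h '' ball c R := by
  rcases le_or_gt R 0 with hR | hR
  · exact ⟨0, by simp [ball_eq_empty.2 (by nlinarith [norm_nonneg (deriv h c)] :
      ‖deriv h c‖ * R / 96 ≤ 0)]⟩
  rcases (norm_nonneg (deriv h c)).eq_or_lt with h0 | h0
  · exact ⟨0, by simp [← h0]⟩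
  have hcont : ContinuousOn (fun z => ‖deriv h z‖) (closedBall c (R / 2)) :=
    ((hh.deriv isOpen_ball).continuousOn.mono (closedBall_subset_ball (by linarith))).norm
  obtain ⟨p, t, -, hsub, hpt, hderiv⟩ := exists_ball_forall_le_two_mul (half_pos hR) hcont h0
  have hsub : ball p t ⊆ ball c R := hsub.trans (ball_subset_ball (by linarith))
  have hrad : ‖deriv h c‖ * R / 96 ≤ ‖deriv h p‖ * t / 24 := by linarith
  exact ⟨h p, calc
    ball (h p) (‖deriv h c‖ * R / 96) ⊆ ball (h p) (‖deriv h p‖ * t / 24) := ball_subset_ball hrad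
    _ ⊆ h '' ball p t := ball_subset_image_ball_of_forall_norm_deriv_le (hh.mono hsub) hderiv
    _ ⊆ h '' ball c R := Set.image_mono hsub⟩

theorem norm_deriv_mul_le_of_forall_exists_notMem_image (hh : DifferentiableOn ℂ h (ball c R))
    (hρ : ∀ w, ∃ v ∈ ball w ρ, v ∉ h '' ball c R) : ‖deriv h c‖ * R ≤ 96 * ρ := by
  by_contra! hlt
  obtain ⟨w, hw⟩ := exists_ball_subset_image_ball hh
  obtain ⟨v, hv, hvh⟩ := hρ w
  exact hvh (hw (ball_subset_ball (by linarith) hv))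

theorem dist_le_of_forall_exists_notMem_image (hh : DifferentiableOn ℂ h (ball c R))
    (hR : 0 < R) (hρ : ∀ w, ∃ v ∈ ball w ρ, v ∉ h '' ball c R) (hz : z ∈ closedBall c (R / 2)) :
    dist (h z) (h c) ≤ 96 * ρ := by
  have hderiv : ∀ w ∈ closedBall c (R / 2), ‖deriv h w‖ ≤ 96 * ρ / (R / 2) := fun w hw => by
    have hsub : ball w (R / 2) ⊆ ball c R :=
      ball_subset_ball' (by linarith [mem_closedBall.1 hw])
    refine (le_div_iff₀ (half_pos hR)).2
      (norm_deriv_mul_le_of_forall_exists_notMem_image (hh.mono hsub) fun x => ?_)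
    obtain ⟨v, hv, hvh⟩ := hρ x
    exact ⟨v, hv, fun hmem => hvh (Set.image_mono hsub hmem)⟩
  have hdiff : ∀ w ∈ closedBall c (R / 2), DifferentiableAt ℂ h w := fun w hw =>
    hh.differentiableAt (isOpen_ball.mem_nhds (closedBall_subset_ball (by linarith) hw))
  have hC : 0 ≤ 96 * ρ / (R / 2) :=
    (norm_nonneg _).trans (hderiv c (mem_closedBall_self (half_pos hR).le))
  calc dist (h z) (h c) = ‖h z - h c‖ := dist_eq_norm _ _
    _ ≤ 96 * ρ / (R / 2) * ‖z - c‖ := (convex_closedBall c _).norm_image_sub_le_of_norm_deriv_le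
        hdiff hderiv (mem_closedBall_self (half_pos hR).le) hz
    _ ≤ 96 * ρ / (R / 2) * (R / 2) := by gcongr; exact mem_closedBall_iff_norm.1 hz
    _ = 96 * ρ := by field_simp

end Bloch

section HolomorphicBranches

variable {g u : ℂ → ℂ} {c : ℂ} {r : ℝ}

theorem exists_differentiableOn_exp_eq (hg : DifferentiableOn ℂ g (ball c r))
    (h0 : ∀ z ∈ ball c r, g z ≠ 0) :
    ∃ L : ℂ → ℂ, DifferentiableOn ℂ L (ball c r) ∧ L c = Complex.log (g c) ∧
      ∀ z ∈ ball c r, Complex.exp (L z) = g z := by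
  obtain ⟨L, hLc, hL⟩ :=
    ((hg.deriv isOpen_ball).div hg h0).isExactOn_ball.with_val_at c (Complex.log (g c))
  have hLdiff : DifferentiableOn ℂ L (ball c r) := fun z hz =>
    (hL z hz).differentiableAt.differentiableWithinAt
  have hlogDeriv : Set.EqOn (logDeriv fun z => Complex.exp (L z)) (logDeriv g) (ball c r) :=
    fun z hz => by
      simp [logDeriv_apply, (hL z hz).cexp.deriv, mul_div_cancel_left₀]
  obtain ⟨k, -, hk⟩ := (logDeriv_eqOn_iff hLdiff.cexp hg isOpen_ball
    (convex_ball c r).isPreconnected h0 fun _ _ => Complex.exp_ne_zero _).1 hlogDeriv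
  refine ⟨L, hLdiff, hLc, fun z hz => ?_⟩
  have hc : c ∈ ball c r := mem_ball_self (pos_of_mem_ball hz)
  have hk1 : k = 1 := by
    simpa [hLc, Complex.exp_log (h0 c hc), h0 c hc] using hk hc
  simpa [hk1] using hk hz

theorem exists_differentiableOn_pow_eq {n : ℕ} (hn : n ≠ 0) (hg : DifferentiableOn ℂ g (ball c r))
    (h0 : ∀ z ∈ ball c r, g z ≠ 0) :
    ∃ u : ℂ → ℂ, DifferentiableOn ℂ u (ball c r) ∧ ∀ z ∈ ball c r, u z ^ n = g z := by
  obtain ⟨L, hL, -, hexp⟩ := exists_differentiableOn_exp_eq hg h0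
  refine ⟨fun z => Complex.exp (L z / n), (hL.div_const _).cexp, fun z hz => ?_⟩
  rw [← Complex.exp_nat_mul, mul_div_cancel₀ _ (Nat.cast_ne_zero.2 hn), hexp z hz]

theorem norm_log_le_of_inv_le_of_le {w : ℂ} {K : ℝ} (hK : 0 < K) (hKw : K⁻¹ ≤ ‖w‖)
    (hwK : ‖w‖ ≤ K) : ‖Complex.log w‖ ≤ Real.log K + π := by
  have hw : 0 < ‖w‖ := (inv_pos.2 hK).trans_le hKw
  have hlower : -Real.log K ≤ Real.log ‖w‖ := by
    simpa using Real.log_le_log (inv_pos.2 hK) hKw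
  calc ‖Complex.log w‖ ≤ |(Complex.log w).re| + |(Complex.log w).im| :=
        Complex.norm_le_abs_re_add_abs_im _
    _ = |Real.log ‖w‖| + |w.arg| := by rw [Complex.log_re, Complex.log_im]
    _ ≤ Real.log K + π :=
        add_le_add (abs_le.2 ⟨hlower, Real.log_le_log hw hwK⟩) (Complex.abs_arg_le_pi w)

theorem exists_differentiableOn_cosh_eq (hr : 0 < r) (hu : DifferentiableOn ℂ u (ball c r))
    (h1 : ∀ z ∈ ball c r, u z ^ 2 ≠ 1) :
    ∃ h : ℂ → ℂ, DifferentiableOn ℂ h (ball c r) ∧ ‖h c‖ ≤ Real.log (2 * ‖u c‖ + 1) + π ∧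
      ∀ z ∈ ball c r, Complex.cosh (h z) = u z := by
  obtain ⟨v, hv, hv2⟩ := exists_differentiableOn_pow_eq two_ne_zero ((hu.fun_pow 2).sub_const 1)
    fun z hz => sub_ne_zero.2 (h1 z hz)
  have hmul : ∀ z ∈ ball c r, (u z + v z) * (u z - v z) = 1 := fun z hz => by
    linear_combination -hv2 z hz
  obtain ⟨h, hh, hhc, hexp⟩ := exists_differentiableOn_exp_eq (hu.fun_add hv)
    fun z hz => left_ne_zero_of_mul_eq_one (hmul z hz)
  have hc : c ∈ ball c r := mem_ball_self hr
  have hvc : ‖v c‖ ≤ ‖u c‖ + 1 := by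
    refine (pow_le_pow_iff_left₀ (norm_nonneg _) (by positivity) two_ne_zero).1 ?_
    calc ‖v c‖ ^ 2 = ‖u c ^ 2 - 1‖ := by rw [← norm_pow, hv2 c hc]
      _ ≤ ‖u c‖ ^ 2 + 1 := (norm_sub_le _ _).trans_eq (by rw [norm_pow, norm_one])
      _ ≤ (‖u c‖ + 1) ^ 2 := by nlinarith [norm_nonneg (u c)]
  have hlower : (2 * ‖u c‖ + 1)⁻¹ ≤ ‖u c + v c‖ := by
    have hinv : ‖u c + v c‖⁻¹ = ‖u c - v c‖ := by
      rw [← norm_inv, inv_eq_of_mul_eq_one_right (hmul c hc)]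
    refine inv_le_of_inv_le₀ (norm_pos_iff.2 (left_ne_zero_of_mul_eq_one (hmul c hc))) ?_
    rw [hinv]
    linarith [norm_sub_le (u c) (v c)]
  refine ⟨h, hh, ?_, fun z hz => ?_⟩
  · rw [hhc]
    exact norm_log_le_of_inv_le_of_le (by positivity) hlower
      ((norm_add_le _ _).trans (by linarith))
  · rw [Complex.cosh, Complex.exp_neg, hexp z hz, inv_eq_of_mul_eq_one_right (hmul z hz)]
    ring

end HolomorphicBranches

section SchottkyMap

/-- The entire function through which every holomorphic function on a disc that omits `0` and `1`
factors. It replaces the universal covering of `ℂ ∖ {0, 1}`; its own range still contains `1`, and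
the points of the fiber over `1` are the values that the lifted function has to omit. -/
noncomputable def schottkyMap (w : ℂ) : ℂ :=
  Complex.exp (2 * π * Complex.I * Complex.cosh w ^ 2)

theorem norm_two_pi_mul_I : ‖2 * π * Complex.I‖ = 2 * π := by
  simp [abs_of_pos Real.pi_pos]

theorem norm_schottkyMap_le (w : ℂ) :
    ‖schottkyMap w‖ ≤ Real.exp (2 * π * Real.exp ‖w‖ ^ 2) := by
  have hcosh : ‖Complex.cosh w‖ ≤ Real.exp ‖w‖ := by
    rw [Complex.cosh, norm_div, Complex.norm_ofNat, div_le_iff₀ two_pos]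
    calc ‖Complex.exp w + Complex.exp (-w)‖ ≤ ‖Complex.exp w‖ + ‖Complex.exp (-w)‖ :=
          norm_add_le _ _
      _ ≤ Real.exp ‖w‖ + Real.exp ‖-w‖ :=
          add_le_add (Complex.norm_exp_le_exp_norm w) (Complex.norm_exp_le_exp_norm (-w))
      _ = Real.exp ‖w‖ * 2 := by rw [norm_neg, mul_two]
  refine (Complex.norm_exp_le_exp_norm _).trans (Real.exp_le_exp.2 ?_)
  rw [norm_mul, norm_two_pi_mul_I, norm_pow]
  gcongr

theorem schottkyMap_eq_one_of_cosh_sq_eq_intCast {w : ℂ} {m : ℤ} (hm : Complex.cosh w ^ 2 = m) :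
    schottkyMap w = 1 := by
  rw [schottkyMap, hm, mul_comm]
  exact Complex.exp_int_mul_two_pi_mul_I m

theorem cosh_sq_add_one_le_cosh_add_one_sq {x : ℝ} (hx : 0 ≤ x) :
    Real.cosh x ^ 2 + 1 ≤ Real.cosh (x + 1) ^ 2 := by
  have hcosh : 1 ≤ Real.cosh x ^ 2 := one_le_pow₀ (Real.one_le_cosh x)
  have hsinh : 1 ≤ Real.sinh 1 ^ 2 := one_le_pow₀ (Real.self_le_sinh_iff.2 zero_le_one)
  have hprod : 0 ≤ Real.sinh x * Real.sinh 1 :=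
    mul_nonneg (Real.sinh_nonneg_iff.2 hx) (Real.sinh_nonneg_iff.2 zero_le_one)
  calc Real.cosh x ^ 2 + 1 ≤ Real.cosh x ^ 2 * (Real.sinh 1 ^ 2 + 1) := by nlinarith
    _ = (Real.cosh x * Real.cosh 1) ^ 2 := by rw [mul_pow, Real.cosh_sq 1]
    _ ≤ (Real.cosh x * Real.cosh 1 + Real.sinh x * Real.sinh 1) ^ 2 := by
        gcongr
        linarith
    _ = Real.cosh (x + 1) ^ 2 := by rw [Real.cosh_add]

theorem exists_abs_sub_le_one_cosh_sq_eq_intCast (x : ℝ) :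
    ∃ t : ℝ, |t - x| ≤ 1 ∧ ∃ m : ℤ, Real.cosh t ^ 2 = m := by
  wlog hx : 0 ≤ x generalizing x
  · obtain ⟨t, ht, m, hm⟩ := this (-x) (by linarith)
    refine ⟨-t, ?_, m, by rwa [Real.cosh_neg]⟩
    rwa [← abs_neg, neg_sub, sub_neg_eq_add, add_comm, ← sub_neg_eq_add]
  have hceil : (⌈Real.cosh x ^ 2⌉ : ℝ) ≤ Real.cosh (x + 1) ^ 2 :=
    (Int.ceil_lt_add_one _).le.trans (cosh_sq_add_one_le_cosh_add_one_sq hx)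
  obtain ⟨t, ⟨hxt, htx⟩, ht⟩ := intermediate_value_Icc (by linarith : x ≤ x + 1)
    (Real.continuous_cosh.pow 2).continuousOn ⟨Int.le_ceil _, hceil⟩
  exact ⟨t, abs_le.2 ⟨by linarith, by linarith⟩, _, ht⟩

theorem cosh_add_int_mul_pi_mul_I_sq (t : ℂ) (k : ℤ) :
    Complex.cosh (t + k * π * Complex.I) ^ 2 = Complex.cosh t ^ 2 := by
  have hsin : Complex.sin (k * π) = 0 := Complex.sin_int_mul_pi k
  have hcos : Complex.cos (k * π) ^ 2 = 1 := by
    rw [Complex.cos_sq', hsin]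
    ring
  rw [Complex.cosh_add, Complex.cosh_mul_I, Complex.sinh_mul_I, hsin]
  linear_combination Complex.cosh t ^ 2 * hcos

theorem abs_round_div_mul_sub_le {a : ℝ} (ha : 0 < a) (x : ℝ) :
    |round (x / a) * a - x| ≤ a / 2 := by
  calc |round (x / a) * a - x| = |x / a - round (x / a)| * a := by
        rw [← abs_of_pos ha, ← abs_mul, abs_sub_comm, abs_of_pos ha, sub_mul,
          div_mul_cancel₀ x ha.ne']
    _ ≤ 1 / 2 * a := by gcongr; exact abs_sub_round _
    _ = a / 2 := by ring

theorem exists_mem_ball_three_schottkyMap_eq_one (w : ℂ) :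
    ∃ v ∈ ball w 3, schottkyMap v = 1 := by
  obtain ⟨t, ht, m, hm⟩ := exists_abs_sub_le_one_cosh_sq_eq_intCast w.re
  set k : ℤ := round (w.im / π)
  refine ⟨t + k * π * Complex.I, ?_, schottkyMap_eq_one_of_cosh_sq_eq_intCast (m := m) ?_⟩
  · rw [mem_ball_iff_norm]
    calc ‖t + k * π * Complex.I - w‖
        ≤ |(t + k * π * Complex.I - w).re| + |(t + k * π * Complex.I - w).im| :=
          Complex.norm_le_abs_re_add_abs_im _
      _ = |t - w.re| + |k * π - w.im| := by simp
      _ ≤ 1 + π / 2 := add_le_add ht (abs_round_div_mul_sub_le Real.pi_pos w.im)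
      _ < 3 := by linarith [Real.pi_lt_four]
  · rw [cosh_add_int_mul_pi_mul_I_sq]
    exact_mod_cast hm

end SchottkyMap

section OmitsZeroOneOn

variable {E : Type*} [NormedAddCommGroup E] [NormedSpace ℂ E]

/-- `f` is holomorphic on `U` and omits the values `0` and `1` there: the functions to which
Schottky's theorem applies. -/
structure OmitsZeroOneOn (f : E → ℂ) (U : Set E) : Prop where
  differentiableOn : DifferentiableOn ℂ f U
  ne_zero : ∀ z ∈ U, f z ≠ 0
  ne_one : ∀ z ∈ U, f z ≠ 1

namespace OmitsZeroOneOn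

theorem mono {f : E → ℂ} {U V : Set E} (hf : OmitsZeroOneOn f V) (hUV : U ⊆ V) :
    OmitsZeroOneOn f U :=
  ⟨hf.differentiableOn.mono hUV, fun z hz => hf.ne_zero z (hUV hz),
    fun z hz => hf.ne_one z (hUV hz)⟩

theorem one_sub {f : E → ℂ} {U : Set E} (hf : OmitsZeroOneOn f U) :
    OmitsZeroOneOn (fun z => 1 - f z) U :=
  ⟨hf.differentiableOn.const_sub 1, fun z hz => sub_ne_zero.2 (hf.ne_one z hz).symm,
    fun z hz => by simpa using hf.ne_zero z hz⟩

theorem comp {E' : Type*} [NormedAddCommGroup E'] [NormedSpace ℂ E'] {f : E → ℂ} {U : Set E}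
    {φ : E' → E} {V : Set E'} (hf : OmitsZeroOneOn f U) (hφ : DifferentiableOn ℂ φ V)
    (hmaps : Set.MapsTo φ V U) : OmitsZeroOneOn (f ∘ φ) V :=
  ⟨hf.differentiableOn.comp hφ hmaps, fun z hz => hf.ne_zero (φ z) (hmaps hz),
    fun z hz => hf.ne_one (φ z) (hmaps hz)⟩

theorem exists_schottkyMap_eq {f : ℂ → ℂ} {c : ℂ} {r : ℝ} (hr : 0 < r)
    (hf : OmitsZeroOneOn f (ball c r)) :
    ∃ h : ℂ → ℂ, DifferentiableOn ℂ h (ball c r) ∧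
      ‖h c‖ ≤ Real.log (2 * ‖Complex.log (f c)‖ + 3) + π ∧
      ∀ z ∈ ball c r, schottkyMap (h z) = f z := by
  obtain ⟨L, hL, hLc, hexp⟩ := exists_differentiableOn_exp_eq hf.differentiableOn hf.ne_zero
  have hL_ne : ∀ z ∈ ball c r, ∀ m : ℤ, L z / (2 * π * Complex.I) ≠ m := fun z hz m hm => by
    refine hf.ne_one z hz ?_
    rw [← hexp z hz, (div_eq_iff Complex.two_pi_I_ne_zero).1 hm]
    exact Complex.exp_int_mul_two_pi_mul_I m
  obtain ⟨u, hu, hu2⟩ := exists_differentiableOn_pow_eq two_ne_zero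
    (hL.div_const (2 * π * Complex.I)) fun z hz => mod_cast hL_ne z hz 0
  obtain ⟨h, hh, hhc, hcosh⟩ := exists_differentiableOn_cosh_eq hr hu
    fun z hz => by rw [hu2 z hz]; exact mod_cast hL_ne z hz 1
  have huc : ‖u c‖ ≤ ‖Complex.log (f c)‖ + 1 := by
    have hsq : ‖u c‖ ^ 2 = ‖Complex.log (f c)‖ / (2 * π) := by
      rw [← norm_pow, hu2 c (mem_ball_self hr), hLc, norm_div, norm_two_pi_mul_I]
    have hle : ‖Complex.log (f c)‖ / (2 * π) ≤ ‖Complex.log (f c)‖ :=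
      div_le_self (norm_nonneg _) (by linarith [Real.pi_gt_three])
    nlinarith [norm_nonneg (u c), norm_nonneg (Complex.log (f c))]
  refine ⟨h, hh, hhc.trans ?_, fun z hz => ?_⟩
  · exact add_le_add (Real.log_le_log (by positivity) (by linarith)) le_rfl
  · rw [schottkyMap, hcosh z hz, hu2 z hz, mul_div_cancel₀ _ Complex.two_pi_I_ne_zero, hexp z hz]

theorem exists_bound_of_norm_log_le (B : ℝ) :
    ∃ C : ℝ, ∀ (f : ℂ → ℂ) (c : ℂ) (r : ℝ), 0 < r → OmitsZeroOneOn f (ball c r) →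
      ‖Complex.log (f c)‖ ≤ B → ∀ z ∈ closedBall c (r / 2), ‖f z‖ ≤ C := by
  refine ⟨Real.exp (2 * π * Real.exp (96 * 3 + (Real.log (2 * B + 3) + π)) ^ 2),
    fun f c r hr hf hB z hz => ?_⟩
  obtain ⟨h, hh, hhc, hlift⟩ := hf.exists_schottkyMap_eq hr
  have homit : ∀ w, ∃ v ∈ ball w 3, v ∉ h '' ball c r := fun w => by
    obtain ⟨v, hv, hv1⟩ := exists_mem_ball_three_schottkyMap_eq_one w
    refine ⟨v, hv, ?_⟩
    rintro ⟨x, hx, rfl⟩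
    exact hf.ne_one x hx ((hlift x hx).symm.trans hv1)
  have hhz : ‖h z‖ ≤ 96 * 3 + (Real.log (2 * B + 3) + π) := calc
    ‖h z‖ ≤ ‖h z - h c‖ + ‖h c‖ := norm_le_norm_sub_add _ _
    _ ≤ 96 * 3 + (Real.log (2 * ‖Complex.log (f c)‖ + 3) + π) := by
        gcongr
        rw [← dist_eq_norm]
        exact dist_le_of_forall_exists_notMem_image hh hr homit hz
    _ ≤ 96 * 3 + (Real.log (2 * B + 3) + π) := by gcongr
  rw [← hlift z (closedBall_subset_ball (by linarith) hz)]
  exact (norm_schottkyMap_le (h z)).trans (by gcongr)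

/-- **Schottky's theorem** on discs. -/
theorem exists_bound_of_norm_le (M : ℝ) :
    ∃ C : ℝ, ∀ (f : ℂ → ℂ) (c : ℂ) (r : ℝ), 0 < r → OmitsZeroOneOn f (ball c r) →
      ‖f c‖ ≤ M → ∀ z ∈ closedBall c (r / 2), ‖f z‖ ≤ C := by
  have hK : (0 : ℝ) < max M 0 + 2 := by positivity
  obtain ⟨C, hC⟩ := exists_bound_of_norm_log_le (Real.log (max M 0 + 2) + π)
  have hlog : ∀ w : ℂ, 1 / 2 ≤ ‖w‖ → ‖w‖ ≤ max M 0 + 2 →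
      ‖Complex.log w‖ ≤ Real.log (max M 0 + 2) + π := fun w hw => by
    refine norm_log_le_of_inv_le_of_le hK (le_trans ?_ hw)
    rw [← one_div]
    gcongr
    linarith [le_max_right M 0]
  refine ⟨C + 1, fun f c r hr hf hM z hz => ?_⟩
  have hM0 := le_max_left M 0
  rcases le_total (1 / 2) ‖f c‖ with hfc | hfc
  · linarith [hC f c r hr hf (hlog (f c) hfc (by linarith)) z hz]
  -- The logarithm of `f c` is not controlled when `f c` is close to `0`, that of `1 - f c` is.
  · have hlower : 1 / 2 ≤ ‖1 - f c‖ := by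
      linarith [norm_sub_norm_le 1 (f c), norm_one (α := ℂ)]
    have hupper : ‖1 - f c‖ ≤ max M 0 + 2 := by
      linarith [norm_sub_le 1 (f c), norm_one (α := ℂ)]
    have hbound := hC _ c r hr hf.one_sub (hlog _ hlower hupper) z hz
    linarith [norm_sub_norm_le (f z) 1, norm_sub_rev (f z) 1, norm_one (α := ℂ)]

theorem uniformlyBoundedOn_closedBall {𝓕 : Set (E → ℂ)} {c : E} {R : ℝ} (hR : 0 < R)
    (h𝓕 : ∀ f ∈ 𝓕, OmitsZeroOneOn f (ball c R)) (hc : UniformlyBoundedOn 𝓕 {c}) :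
    UniformlyBoundedOn 𝓕 (closedBall c (R / 2)) := by
  obtain ⟨M, hM⟩ := hc
  obtain ⟨C, hC⟩ := exists_bound_of_norm_le M
  refine ⟨C, fun f hf z hz => ?_⟩
  have hmaps : Set.MapsTo (fun t : ℂ => c + t • (z - c)) (ball 0 2) (ball c R) := fun t ht => by
    rw [mem_ball_zero_iff] at ht
    rw [mem_closedBall_iff_norm] at hz
    rw [mem_ball_iff_norm, add_sub_cancel_left, norm_smul]
    nlinarith [norm_nonneg (z - c), norm_nonneg t]
  have hslice := hC _ 0 2 two_pos ((h𝓕 f hf).comp (by fun_prop) hmaps)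
    (by simpa using hM f hf c rfl) 1 (by simp)
  simpa using hslice

end OmitsZeroOneOn

end OmitsZeroOneOn

theorem isCompact_setOf_le_infDist_frontier {E : Type*} [PseudoMetricSpace E] [ProperSpace E]
    {Ω : Set E} (hΩ : IsOpen Ω) (hbdd : Bornology.IsBounded Ω) {ε : ℝ} (hε : 0 < ε) :
    IsCompact {z ∈ Ω | ε ≤ infDist z (frontier Ω)} := by
  have heq : {z ∈ Ω | ε ≤ infDist z (frontier Ω)} =
      closure Ω ∩ {z | ε ≤ infDist z (frontier Ω)} := by
    refine Set.Subset.antisymm (Set.inter_subset_inter_left _ subset_closure) ?_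
    rintro z ⟨hz, hεz⟩
    refine ⟨by_contra fun hzΩ => ?_, hεz⟩
    have hfrontier : z ∈ frontier Ω := hΩ.frontier_eq ▸ ⟨hz, hzΩ⟩
    exact (hε.trans_le hεz).ne' (infDist_zero_of_mem hfrontier)
  rw [heq]
  exact hbdd.isCompact_closure.inter_right (isClosed_le continuous_const (continuous_infDist_pt _))

theorem schottky_general_domain_general {E : Type*} [NormedAddCommGroup E] [NormedSpace ℂ E]
    {Ω K : Set E} (hΩ : IsOpen Ω) (hconn : IsPreconnected Ω) (hK : IsCompact K) (hKΩ : K ⊆ Ω)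
    {a : E} (ha : a ∈ Ω) (M : ℝ) :
    ∃ C > 0, ∀ f : E → ℂ, DifferentiableOn ℂ f Ω → (∀ z ∈ Ω, f z ≠ 0 ∧ f z ≠ 1) → ‖f a‖ ≤ M →
      ∀ z ∈ K, ‖f z‖ < C := by
  let 𝓕 : Set (E → ℂ) := {f | OmitsZeroOneOn f Ω ∧ ‖f a‖ ≤ M}
  have hprop : ∀ c, ∀ R > 0, ball c R ⊆ Ω → UniformlyBoundedOn 𝓕 {c} →
      UniformlyBoundedOn 𝓕 (closedBall c (R / 2)) := fun _ _ hR hball =>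
    OmitsZeroOneOn.uniformlyBoundedOn_closedBall hR fun _ hf => hf.1.mono hball
  have ha_bdd : UniformlyBoundedOn 𝓕 {a} := ⟨M, by rintro f hf _ rfl; exact hf.2⟩
  obtain ⟨C, hC0, hC⟩ := (UniformlyBoundedOn.of_isPreconnected_of_isCompact hΩ hconn hprop ha
    ha_bdd hK hKΩ).exists_pos_forall_norm_lt
  exact ⟨C, hC0, fun f hf homit hfa =>
    hC f ⟨⟨hf, fun z hz => (homit z hz).1, fun z hz => (homit z hz).2⟩, hfa⟩⟩

/-- Schottky's theorem in a bounded domain Ω ⊂ ℂⁿ. -/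
theorem schottky_general_domain {n : ℕ}
    (Ω : Set (EuclideanSpace ℂ (Fin n))) (hΩ : IsOpen Ω) (hconn : IsConnected Ω)
    (hbdd : Bornology.IsBounded Ω)
    (a : EuclideanSpace ℂ (Fin n)) (ha : a ∈ Ω) (M : ℝ) (hM : 0 < M) :
    ∃ ε₀ > 0, ∀ ε : ℝ, 0 < ε → ε ≤ ε₀ →
      ∃ C > 0, ∀ f : EuclideanSpace ℂ (Fin n) → ℂ,
        DifferentiableOn ℂ f Ω → (∀ z ∈ Ω, f z ≠ 0 ∧ f z ≠ 1) → ‖f a‖ < M →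
          ∀ z ∈ Ω, ε ≤ infDist z (frontier Ω) → ‖f z‖ < C := by
  refine ⟨1, one_pos, fun ε hε _ => ?_⟩
  obtain ⟨C, hC0, hC⟩ := schottky_general_domain_general hΩ hconn.isPreconnected
    (isCompact_setOf_le_infDist_frontier hΩ hbdd hε) (Set.sep_subset _ _) ha M
  exact ⟨C, hC0, fun f hf homit hfa z hz hεz => hC f hf homit hfa.le z ⟨hz, hεz⟩⟩
end

section
/- There exists a constant L ≥ 0 such that for every holomorphic function f on the unit disc Δ omitting 0 and 1 with |f(0)| < M, and for every r ∈ [0,1), one has |f(z)| < tan(arctan M + 2rL/(1 − r²)) for all |z| < r. -/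
open Metric Real

/-!
Since the disc is simply connected, `f = g⁴` and `f - 1 = h⁴` there, so `z ↦ (g z, h z)` maps the
disc into the Fermat quartic `x⁴ = y⁴ + 1`. The canonical forms `ω, xω, yω` with `ω = dx / y³` pull
back to a vector `Φ` of holomorphic functions, and `‖Φ‖² |dz|²` has curvature bounded above by a
negative constant. The Ahlfors–Schwarz lemma then bounds `Φ`, and with it the spherical derivative
of `f`, by a universal constant over `1 - ‖z‖²`. Integrating along a radius bounds the growth of
`arctan ‖f‖`.

The logarithm of `‖Φ‖²` is not differentiated: at a maximum of `‖Φ‖² (R² - ‖z‖²)²` the curvature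
inequality is read off from the maximum modulus principle for `⟨Φ z₀, Φ z⟩ (R² - z̄₀ z)²`.
-/

section

open Filter Set Topology
open scoped ComplexConjugate InnerProductSpace

section GramDeterminant

variable {E : Type*} [NormedAddCommGroup E] [InnerProductSpace ℂ E]

/-- The Gram determinant of two vectors, i.e. `‖v ∧ w‖²`. -/
noncomputable def gramDet (v w : E) : ℝ :=
  ‖v‖ ^ 2 * ‖w‖ ^ 2 - ‖⟪v, w⟫_ℂ‖ ^ 2

lemma gramDet_smul_left (c : ℂ) (v w : E) : gramDet (c • v) w = ‖c‖ ^ 2 * gramDet v w := by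
  simp only [gramDet, inner_smul_left, norm_smul, norm_mul, RCLike.norm_conj]
  ring

lemma gramDet_smul_right (c : ℂ) (v w : E) : gramDet v (c • w) = ‖c‖ ^ 2 * gramDet v w := by
  simp only [gramDet, inner_smul_right, norm_smul, norm_mul]
  ring

lemma gramDet_add_smul_right (c : ℂ) (v w : E) : gramDet v (w + c • v) = gramDet v w := by
  have norm_sq_add : ‖w + c • v‖ ^ 2 =
      ‖w‖ ^ 2 + 2 * (c * conj ⟪v, w⟫_ℂ).re + ‖c‖ ^ 2 * ‖v‖ ^ 2 := by
    rw [norm_add_sq (𝕜 := ℂ), inner_smul_right, ← inner_conj_symm, norm_smul, mul_pow]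
    rfl
  have norm_sq_inner : ‖⟪v, w + c • v⟫_ℂ‖ ^ 2 =
      ‖⟪v, w⟫_ℂ‖ ^ 2 + 2 * ‖v‖ ^ 2 * (c * conj ⟪v, w⟫_ℂ).re + ‖c‖ ^ 2 * ‖v‖ ^ 4 := by
    rw [inner_add_right, inner_smul_right, inner_self_eq_norm_sq_to_K]
    simp only [← Complex.normSq_eq_norm_sq, Complex.normSq_apply, Complex.add_re, Complex.add_im,
      Complex.mul_re, Complex.mul_im, Complex.conj_re, Complex.conj_im, Complex.coe_algebraMap,
      ← Complex.ofReal_pow, Complex.ofReal_re, Complex.ofReal_im]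
    ring
  rw [gramDet, gramDet, norm_sq_add, norm_sq_inner]
  ring

lemma continuous_gramDet_right (v : E) : Continuous (gramDet v) := by
  unfold gramDet
  fun_prop

lemma gramDet_fin_three (v w : EuclideanSpace ℂ (Fin 3)) :
    gramDet v w = ‖v 0 * w 1 - v 1 * w 0‖ ^ 2 + ‖v 0 * w 2 - v 2 * w 0‖ ^ 2
      + ‖v 1 * w 2 - v 2 * w 1‖ ^ 2 := by
  rw [gramDet, EuclideanSpace.norm_sq_eq, EuclideanSpace.norm_sq_eq, PiLp.inner_apply]
  simp only [Fin.sum_univ_three, ← Complex.normSq_eq_norm_sq, Complex.normSq_apply,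
    RCLike.inner_apply, Complex.add_re, Complex.add_im, Complex.sub_re, Complex.sub_im,
    Complex.mul_re, Complex.mul_im, Complex.conj_re, Complex.conj_im]
  ring

end GramDeterminant

section MaximumPrinciple

lemma nonpos_of_norm_sq_add_le {F : Type*} [NormedAddCommGroup F] [NormedSpace ℂ F]
    [StrictConvexSpace ℝ F] {G : ℂ → F} {Q : ℂ → ℝ} {q : ℝ} {z₀ : ℂ}
    (hG : ∀ᶠ z in 𝓝 z₀, DifferentiableAt ℂ G z) (hQ : Tendsto Q (𝓝[≠] z₀) (𝓝 q))
    (hle : ∀ᶠ z in 𝓝 z₀, ‖G z‖ ^ 2 + ‖z - z₀‖ ^ 2 * Q z ≤ ‖G z₀‖ ^ 2) : q ≤ 0 := by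
  by_contra! hq
  have hlt : ∀ᶠ z in 𝓝[≠] z₀, ‖G z‖ < ‖G z₀‖ := by
    filter_upwards [hQ.eventually_const_lt hq, hle.filter_mono nhdsWithin_le_nhds,
      self_mem_nhdsWithin] with z hQz hGz hz
    have hz' : 0 < ‖z - z₀‖ := norm_sub_pos_iff.2 hz
    refine lt_of_pow_lt_pow_left₀ 2 (norm_nonneg _) ?_
    linarith [mul_pos (pow_pos hz' 2) hQz]
  have hmax : IsLocalMax (norm ∘ G) z₀ := by
    filter_upwards [eventually_nhdsWithin_iff.1 hlt] with z hz
    rcases eq_or_ne z z₀ with rfl | hne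
    exacts [le_rfl, (hz hne).le]
  have hconst := Complex.eventually_eq_of_isLocalMax_norm hG hmax
  obtain ⟨z, hz, hGz⟩ := (hlt.and (hconst.filter_mono nhdsWithin_le_nhds)).exists
  exact hz.ne (congrArg norm hGz)

lemma sq_sub_norm_sq_mul (R : ℝ) (a b : ℂ) :
    (R ^ 2 - ‖a‖ ^ 2) * (R ^ 2 - ‖b‖ ^ 2) =
      ‖(R : ℂ) ^ 2 - conj a * b‖ ^ 2 - R ^ 2 * ‖b - a‖ ^ 2 := by
  simp only [← Complex.normSq_eq_norm_sq, Complex.normSq_apply, ← Complex.ofReal_pow,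
    Complex.sub_re, Complex.sub_im, Complex.mul_re, Complex.mul_im, Complex.conj_re,
    Complex.conj_im, Complex.ofReal_re, Complex.ofReal_im]
  ring

variable {E : Type*} [NormedAddCommGroup E] [InnerProductSpace ℂ E]

lemma norm_sq_mul_norm_sq_eq_slope (Φ : ℂ → E) (z₀ z : ℂ) :
    ‖Φ z₀‖ ^ 2 * ‖Φ z‖ ^ 2 =
      ‖⟪Φ z₀, Φ z⟫_ℂ‖ ^ 2 + ‖z - z₀‖ ^ 2 * gramDet (Φ z₀) (slope Φ z₀ z) := by
  have hslope : Φ z = (z - z₀) • slope Φ z₀ z + (1 : ℂ) • Φ z₀ := by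
    rw [one_smul, sub_smul_slope, vsub_eq_sub, sub_add_cancel]
  have hgram : gramDet (Φ z₀) (Φ z) = ‖z - z₀‖ ^ 2 * gramDet (Φ z₀) (slope Φ z₀ z) := by
    conv_lhs => rw [hslope, gramDet_add_smul_right, gramDet_smul_right]
  rw [← hgram, gramDet]
  ring

-- Both factors `‖Φ‖²` and `(R² - ‖z‖²)²` are polarized at `z₀`: up to a multiple of `‖z - z₀‖²`,
-- their product is the squared modulus of a function holomorphic in `z`.
lemma norm_sq_mul_sq_sub_norm_sq_sq_eq (Φ : ℂ → E) (R : ℝ) (z₀ z : ℂ) :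
    ‖Φ z₀‖ ^ 2 * (R ^ 2 - ‖z₀‖ ^ 2) ^ 2 * (‖Φ z‖ ^ 2 * (R ^ 2 - ‖z‖ ^ 2) ^ 2) =
      ‖⟪Φ z₀, Φ z⟫_ℂ * ((R : ℂ) ^ 2 - conj z₀ * z) ^ 2‖ ^ 2 + ‖z - z₀‖ ^ 2 *
        (gramDet (Φ z₀) (slope Φ z₀ z) * ((R ^ 2 - ‖z₀‖ ^ 2) * (R ^ 2 - ‖z‖ ^ 2)) ^ 2 +
          ‖⟪Φ z₀, Φ z⟫_ℂ‖ ^ 2 *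
            (R ^ 4 * ‖z - z₀‖ ^ 2 - 2 * R ^ 2 * ‖(R : ℂ) ^ 2 - conj z₀ * z‖ ^ 2)) := by
  calc ‖Φ z₀‖ ^ 2 * (R ^ 2 - ‖z₀‖ ^ 2) ^ 2 * (‖Φ z‖ ^ 2 * (R ^ 2 - ‖z‖ ^ 2) ^ 2)
      = ‖Φ z₀‖ ^ 2 * ‖Φ z‖ ^ 2 * ((R ^ 2 - ‖z₀‖ ^ 2) * (R ^ 2 - ‖z‖ ^ 2)) ^ 2 := by ring
    _ = _ := by
      rw [norm_sq_mul_norm_sq_eq_slope, sq_sub_norm_sq_mul, norm_mul, norm_pow]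
      ring

lemma gramDet_deriv_mul_le_of_isLocalMax {Φ : ℂ → E} {z₀ : ℂ} {R : ℝ} (hz₀ : ‖z₀‖ < R)
    (hΦ : ∀ᶠ z in 𝓝 z₀, DifferentiableAt ℂ Φ z)
    (hmax : IsLocalMax (fun z => ‖Φ z‖ ^ 2 * (R ^ 2 - ‖z‖ ^ 2) ^ 2) z₀) :
    gramDet (Φ z₀) (deriv Φ z₀) * (R ^ 2 - ‖z₀‖ ^ 2) ^ 2 ≤ 2 * R ^ 2 * ‖Φ z₀‖ ^ 4 := by
  have hw : 0 < R ^ 2 - ‖z₀‖ ^ 2 :=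
    sub_pos.2 (pow_lt_pow_left₀ hz₀ (norm_nonneg _) two_ne_zero)
  have hΦ₀ := hΦ.self_of_nhds
  have hΦc := hΦ₀.continuousAt
  have hinner : ‖⟪Φ z₀, Φ z₀⟫_ℂ‖ = ‖Φ z₀‖ ^ 2 := by
    rw [← inner_self_re_eq_norm, inner_self_eq_norm_sq]
  have hdist : ‖(R : ℂ) ^ 2 - conj z₀ * z₀‖ = R ^ 2 - ‖z₀‖ ^ 2 := by
    rw [Complex.conj_mul', ← Complex.ofReal_pow, ← Complex.ofReal_pow, ← Complex.ofReal_sub,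
      Complex.norm_of_nonneg hw.le]
  have hgram : Tendsto (fun z => gramDet (Φ z₀) (slope Φ z₀ z)) (𝓝[≠] z₀)
      (𝓝 (gramDet (Φ z₀) (deriv Φ z₀))) :=
    ((continuous_gramDet_right (Φ z₀)).tendsto _).comp
      (hasDerivAt_iff_tendsto_slope.1 hΦ₀.hasDerivAt)
  have hweight : ContinuousAt
      (fun z : ℂ => ((R ^ 2 - ‖z₀‖ ^ 2) * (R ^ 2 - ‖z‖ ^ 2)) ^ 2) z₀ := by fun_prop
  have hrest : ContinuousAt (fun z => ‖⟪Φ z₀, Φ z⟫_ℂ‖ ^ 2 *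
      (R ^ 4 * ‖z - z₀‖ ^ 2 - 2 * R ^ 2 * ‖(R : ℂ) ^ 2 - conj z₀ * z‖ ^ 2)) z₀ := by fun_prop
  have hlim := nonpos_of_norm_sq_add_le
    (G := fun z => ⟪Φ z₀, Φ z⟫_ℂ * ((R : ℂ) ^ 2 - conj z₀ * z) ^ 2)
    (hΦ.mono fun z hz => by
      have : DifferentiableAt ℂ (fun z => ⟪Φ z₀, Φ z⟫_ℂ) z :=
        (innerSL ℂ (Φ z₀)).differentiableAt.comp z hz
      fun_prop)
    ((hgram.mul (hweight.tendsto.mono_left nhdsWithin_le_nhds)).add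
      (hrest.tendsto.mono_left nhdsWithin_le_nhds))
    (hmax.mono fun z hz => by
      rw [← norm_sq_mul_sq_sub_norm_sq_sq_eq, norm_mul, norm_pow, hinner, hdist]
      calc _ ≤ ‖Φ z₀‖ ^ 2 * (R ^ 2 - ‖z₀‖ ^ 2) ^ 2 *
            (‖Φ z₀‖ ^ 2 * (R ^ 2 - ‖z₀‖ ^ 2) ^ 2) := by gcongr
        _ = _ := by ring)
  rw [hinner, hdist, sub_self, norm_zero] at hlim
  refine le_of_mul_le_mul_right ?_ (pow_pos hw 2)
  linarith

lemma mul_norm_sq_mul_sq_le_of_curvature_of_lt {Φ : ℂ → E} {K r R : ℝ} (hK : 0 ≤ K) (hrR : r < R)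
    (hΦ : DifferentiableOn ℂ Φ (ball 0 R))
    (hcurv : ∀ z ∈ ball (0 : ℂ) R, K * ‖Φ z‖ ^ 6 ≤ gramDet (Φ z) (deriv Φ z)) {z : ℂ}
    (hz : ‖z‖ < r) :
    K * (‖Φ z‖ ^ 2 * (r ^ 2 - ‖z‖ ^ 2) ^ 2) ≤ 2 * r ^ 2 := by
  have hr : 0 < r := (norm_nonneg z).trans_lt hz
  have hsub : closedBall (0 : ℂ) r ⊆ ball 0 R := closedBall_subset_ball hrR
  have hcont : ContinuousOn (fun z => ‖Φ z‖ ^ 2 * (r ^ 2 - ‖z‖ ^ 2) ^ 2) (closedBall 0 r) := by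
    have := hΦ.continuousOn.mono hsub
    fun_prop
  obtain ⟨z₀, hz₀, hmax⟩ := (isCompact_closedBall (0 : ℂ) r).exists_isMaxOn
    (nonempty_closedBall.2 hr.le) hcont
  have hz_mem : z ∈ closedBall (0 : ℂ) r := mem_closedBall_zero_iff.2 hz.le
  refine (mul_le_mul_of_nonneg_left (hmax hz_mem) hK).trans ?_
  dsimp only
  rcases (mem_closedBall_zero_iff.1 hz₀).eq_or_lt with hbdry | hint
  · rw [hbdry, sub_self, zero_pow two_ne_zero, mul_zero, mul_zero]
    positivity
  rcases eq_or_ne (Φ z₀) 0 with hzero | hne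
  · rw [hzero, norm_zero, zero_pow two_ne_zero, zero_mul, mul_zero]
    positivity
  have hloc : IsLocalMax (fun z => ‖Φ z‖ ^ 2 * (r ^ 2 - ‖z‖ ^ 2) ^ 2) z₀ :=
    hmax.isLocalMax (closedBall_mem_nhds_of_mem (mem_ball_zero_iff.2 hint))
  have hgram := gramDet_deriv_mul_le_of_isLocalMax hint
    (hΦ.eventually_differentiableAt (isOpen_ball.mem_nhds (hsub hz₀))) hloc
  refine le_of_mul_le_mul_right ?_ (pow_pos (norm_pos_iff.2 hne) 4)
  calc K * (‖Φ z₀‖ ^ 2 * (r ^ 2 - ‖z₀‖ ^ 2) ^ 2) * ‖Φ z₀‖ ^ 4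
      = K * ‖Φ z₀‖ ^ 6 * (r ^ 2 - ‖z₀‖ ^ 2) ^ 2 := by ring
    _ ≤ gramDet (Φ z₀) (deriv Φ z₀) * (r ^ 2 - ‖z₀‖ ^ 2) ^ 2 := by
      gcongr
      exact hcurv z₀ (hsub hz₀)
    _ ≤ 2 * r ^ 2 * ‖Φ z₀‖ ^ 4 := hgram

-- The Ahlfors–Schwarz lemma: by `hcurv`, the metric `‖Φ z‖² |dz|²` has Gaussian curvature at
-- most `-2K`.
theorem mul_norm_sq_mul_sq_le_of_curvature {Φ : ℂ → E} {K R : ℝ} (hK : 0 ≤ K)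
    (hΦ : DifferentiableOn ℂ Φ (ball 0 R))
    (hcurv : ∀ z ∈ ball (0 : ℂ) R, K * ‖Φ z‖ ^ 6 ≤ gramDet (Φ z) (deriv Φ z)) {z : ℂ}
    (hz : z ∈ ball 0 R) :
    K * (‖Φ z‖ ^ 2 * (R ^ 2 - ‖z‖ ^ 2) ^ 2) ≤ 2 * R ^ 2 := by
  have hzR : ‖z‖ < R := mem_ball_zero_iff.1 hz
  have hlhs : Continuous fun r : ℝ => K * (‖Φ z‖ ^ 2 * (r ^ 2 - ‖z‖ ^ 2) ^ 2) := by fun_prop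
  have hrhs : Continuous fun r : ℝ => 2 * r ^ 2 := by fun_prop
  refine le_of_tendsto_of_tendsto (b := 𝓝[<] R) (hlhs.tendsto R |>.mono_left nhdsWithin_le_nhds)
    (hrhs.tendsto R |>.mono_left nhdsWithin_le_nhds) ?_
  filter_upwards [Ioo_mem_nhdsLT hzR] with r hr
  exact mul_norm_sq_mul_sq_le_of_curvature_of_lt hK hr.2 hΦ hcurv hr.1

end MaximumPrinciple

section FermatQuartic

/-- The canonical forms `ω, xω, yω`, `ω = dx / y³`, of the Fermat quartic `x⁴ = y⁴ + 1`, pulled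
back along the curve `z ↦ (g z, h z)` and written as multiples of `dz`. -/
noncomputable def fermatForms (g h : ℂ → ℂ) (z : ℂ) : EuclideanSpace ℂ (Fin 3) :=
  (deriv g z / h z ^ 3) • !₂[1, g z, h z]

variable {g h : ℂ → ℂ} {U : Set ℂ}

lemma pow_mul_deriv_eq_of_pow_eq_pow_add {n : ℕ} (hn : n ≠ 0) {c : ℂ} {z : ℂ}
    (hg : DifferentiableAt ℂ g z) (hh : DifferentiableAt ℂ h z)
    (hgh : ∀ᶠ w in 𝓝 z, g w ^ n = h w ^ n + c) :
    g z ^ (n - 1) * deriv g z = h z ^ (n - 1) * deriv h z := by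
  have hderiv := ((hh.hasDerivAt.pow n).add_const c).congr_of_eventuallyEq hgh |>.unique
    (hg.hasDerivAt.pow n)
  refine mul_left_cancel₀ (Nat.cast_ne_zero.2 hn : (n : ℂ) ≠ 0) ?_
  linear_combination -hderiv

lemma hasDerivAt_fermatForms {z : ℂ} (hU : U ∈ 𝓝 z) (hg : DifferentiableOn ℂ g U)
    (hh : DifferentiableOn ℂ h U) (hh₀ : h z ≠ 0) :
    HasDerivAt (fermatForms g h)
      ((deriv g z / h z ^ 3) • !₂[0, deriv g z, deriv h z] +
        deriv (fun w => deriv g w / h w ^ 3) z • !₂[1, g z, h z]) z := by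
  have hgz := hg.differentiableAt hU
  have hhz := hh.differentiableAt hU
  have hdg : DifferentiableAt ℂ (deriv g) z := (hg.analyticAt hU).deriv.differentiableAt
  have hcoords : HasDerivAt (fun w => ![1, g w, h w]) ![0, deriv g z, deriv h z] z := by
    refine hasDerivAt_pi.2 fun i => ?_
    fin_cases i
    exacts [hasDerivAt_const z 1, hgz.hasDerivAt, hhz.hasDerivAt]
  have hpoint : HasDerivAt (fun w => !₂[1, g w, h w]) !₂[0, deriv g z, deriv h z] z :=
    (EuclideanSpace.equiv (Fin 3) ℂ).symm.hasFDerivAt.comp_hasDerivAt z hcoords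
  exact (hdg.div (hhz.pow 3) (pow_ne_zero 3 hh₀)).hasDerivAt.smul hpoint

lemma gramDet_fermatForms {z : ℂ} (hU : U ∈ 𝓝 z) (hg : DifferentiableOn ℂ g U)
    (hh : DifferentiableOn ℂ h U) (hh₀ : h z ≠ 0) (hgh : ∀ w ∈ U, g w ^ 4 = h w ^ 4 + 1) :
    gramDet (fermatForms g h z) (deriv (fermatForms g h) z) =
      ‖deriv g z / h z ^ 3‖ ^ 6 * (1 + ‖g z‖ ^ 6 + ‖h z‖ ^ 6) := by
  rw [(hasDerivAt_fermatForms hU hg hh hh₀).deriv, fermatForms, gramDet_smul_left]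
  set F := deriv g z / h z ^ 3
  have hcurve : g z ^ 4 = h z ^ 4 + 1 := hgh z (mem_of_mem_nhds hU)
  have hpow := pow_mul_deriv_eq_of_pow_eq_pow_add four_ne_zero (hg.differentiableAt hU)
    (hh.differentiableAt hU) (eventually_of_mem hU hgh)
  have hdg : deriv g z = F * h z ^ 3 := (div_mul_cancel₀ _ (pow_ne_zero 3 hh₀)).symm
  have hdh : deriv h z = F * g z ^ 3 := by
    refine mul_left_cancel₀ (pow_ne_zero 3 hh₀) ?_
    rw [← hpow, hdg]
    ring
  have hminor : g z * deriv h z - h z * deriv g z = F := by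
    rw [hdg, hdh]
    linear_combination F * hcurve
  rw [gramDet_add_smul_right, gramDet_smul_right, gramDet_fin_three]
  simp only [Matrix.cons_val, one_mul, mul_zero, sub_zero]
  rw [hminor, hdg, hdh]
  simp only [norm_mul, norm_pow]
  ring

lemma norm_pow_le_card_pow_mul_sum_norm_pow {𝕜 ι : Type*} [RCLike 𝕜] [Fintype ι]
    (v : EuclideanSpace 𝕜 ι) (n : ℕ) :
    ‖v‖ ^ (2 * (n + 1)) ≤ (Fintype.card ι : ℝ) ^ n * ∑ i, ‖v i‖ ^ (2 * (n + 1)) := by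
  simp only [pow_mul, EuclideanSpace.norm_sq_eq]
  exact pow_sum_le_card_mul_sum_pow (fun i _ => sq_nonneg ‖v i‖) n

lemma norm_fermatForms_pow_six_le_gramDet {z : ℂ} (hU : U ∈ 𝓝 z) (hg : DifferentiableOn ℂ g U)
    (hh : DifferentiableOn ℂ h U) (hh₀ : h z ≠ 0) (hgh : ∀ w ∈ U, g w ^ 4 = h w ^ 4 + 1) :
    1 / 9 * ‖fermatForms g h z‖ ^ 6 ≤ gramDet (fermatForms g h z) (deriv (fermatForms g h) z) := by
  have hmean := norm_pow_le_card_pow_mul_sum_norm_pow !₂[1, g z, h z] 2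
  rw [gramDet_fermatForms hU hg hh hh₀ hgh, fermatForms, norm_smul, mul_pow, mul_left_comm]
  gcongr
  have hsum : ∑ i, ‖!₂[1, g z, h z] i‖ ^ (2 * (2 + 1)) = 1 + ‖g z‖ ^ 6 + ‖h z‖ ^ 6 := by
    simp [Fin.sum_univ_three]
  rw [hsum, Fintype.card_fin] at hmean
  push_cast at hmean
  linarith

lemma norm_deriv_div_mul_le_of_fermat {R : ℝ} (hg : DifferentiableOn ℂ g (ball 0 R))
    (hh : DifferentiableOn ℂ h (ball 0 R)) (hh₀ : ∀ z ∈ ball (0 : ℂ) R, h z ≠ 0)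
    (hgh : ∀ z ∈ ball (0 : ℂ) R, g z ^ 4 = h z ^ 4 + 1) {z : ℂ} (hz : z ∈ ball 0 R) :
    ‖deriv g z / h z ^ 3‖ * (R ^ 2 - ‖z‖ ^ 2) ≤ 9 / 2 * R := by
  have hnhds : ∀ w ∈ ball (0 : ℂ) R, ball 0 R ∈ 𝓝 w := fun w hw => isOpen_ball.mem_nhds hw
  have hΦ : DifferentiableOn ℂ (fermatForms g h) (ball 0 R) := fun w hw =>
    (hasDerivAt_fermatForms (hnhds w hw) hg hh (hh₀ w hw)).differentiableAt.differentiableWithinAt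
  have hmetric := mul_norm_sq_mul_sq_le_of_curvature (by norm_num) hΦ
    (fun w hw => norm_fermatForms_pow_six_le_gramDet (hnhds w hw) hg hh (hh₀ w hw) hgh) hz
  have hcoord : ‖deriv g z / h z ^ 3‖ ≤ ‖fermatForms g h z‖ := by
    simpa [fermatForms] using PiLp.norm_apply_le (fermatForms g h z) 0
  have hR : 0 ≤ R := (pos_of_mem_ball hz).le
  refine le_of_sq_le_sq ?_ (by positivity)
  calc (‖deriv g z / h z ^ 3‖ * (R ^ 2 - ‖z‖ ^ 2)) ^ 2
      = ‖deriv g z / h z ^ 3‖ ^ 2 * (R ^ 2 - ‖z‖ ^ 2) ^ 2 := mul_pow ..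
    _ ≤ ‖fermatForms g h z‖ ^ 2 * (R ^ 2 - ‖z‖ ^ 2) ^ 2 := by gcongr
    _ ≤ 18 * R ^ 2 := by linarith
    _ ≤ (9 / 2 * R) ^ 2 := by linarith [sq_nonneg R]

end FermatQuartic

section Root

lemma exists_differentiableOn_pow_eq_s3 {U : Set ℂ} (hUc : IsSimplyConnected U) (hUo : IsOpen U)
    {f : ℂ → ℂ} (hf : DifferentiableOn ℂ f U) (hf₀ : ∀ z ∈ U, f z ≠ 0) {n : ℕ} (hn : n ≠ 0) :
    ∃ g : ℂ → ℂ, DifferentiableOn ℂ g U ∧ ∀ z, g z ^ n = f z := by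
  obtain ⟨g, hgc, hg⟩ := Complex.exists_continuousOn_pow_eq hUc hUo hf.continuousOn
    (fun ⟨z, hz, hfz⟩ => hf₀ z hz hfz) hn
  refine ⟨g, fun z hz => ?_, hg⟩
  have hgz : g z ≠ 0 := fun h => hf₀ z hz (by rw [← hg, h, zero_pow hn])
  have hU := hUo.mem_nhds hz
  have hpow_deriv : (n : ℂ) * g z ^ (n - 1) ≠ 0 :=
    mul_ne_zero (Nat.cast_ne_zero.2 hn) (pow_ne_zero _ hgz)
  exact ((hasDerivAt_pow n (g z)).of_comp_left (hgc.continuousAt hU)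
    (hf.differentiableAt hU).hasDerivAt hpow_deriv
    (.of_forall hg)).differentiableAt.differentiableWithinAt

lemma isSimplyConnected_ball {c : ℂ} {R : ℝ} (hR : 0 < R) : IsSimplyConnected (ball c R) :=
  have := (convex_ball c R).contractibleSpace (nonempty_ball.2 hR)
  show SimplyConnectedSpace (ball c R) from inferInstance

end Root

section SphericalDerivative

/-- The spherical derivative, without the usual factor `2`: the rate of change of `arctan ‖f‖` is
at most `sphericalDeriv f`. -/
noncomputable def sphericalDeriv (f : ℂ → ℂ) (z : ℂ) : ℝ :=
  ‖deriv f z‖ / (1 + ‖f z‖ ^ 2)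

lemma pow_three_mul_pow_three_le {a b : ℝ} (hb : 0 ≤ b) (hab : b ^ 4 ≤ a ^ 4 + 1) :
    a ^ 3 * b ^ 3 ≤ 4 * (1 + (a ^ 4) ^ 2) := by
  have hcube : ∀ x : ℝ, x ^ 3 ≤ 1 + x ^ 4 := fun x => by
    nlinarith [sq_nonneg (x ^ 2 - x), sq_nonneg (x ^ 2 - 1)]
  calc a ^ 3 * b ^ 3 ≤ (1 + a ^ 4) * (1 + (a ^ 4 + 1)) := by
        gcongr
        exacts [hcube a, (hcube b).trans (by gcongr)]
    _ ≤ 4 * (1 + (a ^ 4) ^ 2) := by nlinarith [sq_nonneg (a ^ 4 - 1)]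

lemma sphericalDeriv_pow_four_le {g : ℂ → ℂ} {y z : ℂ} (hg : DifferentiableAt ℂ g z) (hy : y ≠ 0)
    (hgy : g z ^ 4 = y ^ 4 + 1) :
    sphericalDeriv (fun w => g w ^ 4) z ≤ 16 * ‖deriv g z / y ^ 3‖ := by
  have hderiv : deriv (fun w => g w ^ 4) z = 4 * (g z ^ 3 * y ^ 3) * (deriv g z / y ^ 3) := by
    rw [(hg.hasDerivAt.fun_pow 4).deriv]
    push_cast
    field_simp
  have hnorm : ‖y‖ ^ 4 ≤ ‖g z‖ ^ 4 + 1 := by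
    calc ‖y‖ ^ 4 = ‖g z ^ 4 - 1‖ := by rw [hgy, add_sub_cancel_right, norm_pow]
      _ ≤ ‖g z‖ ^ 4 + 1 := by rw [← norm_pow, ← norm_one (α := ℂ)]; exact norm_sub_le _ _
  have hpow := pow_three_mul_pow_three_le (norm_nonneg y) hnorm
  rw [sphericalDeriv, div_le_iff₀ (by positivity), hderiv, norm_mul, norm_mul, norm_mul, norm_pow,
    norm_pow, norm_pow, Complex.norm_ofNat]
  calc 4 * (‖g z‖ ^ 3 * ‖y‖ ^ 3) * ‖deriv g z / y ^ 3‖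
      ≤ 4 * (4 * (1 + (‖g z‖ ^ 4) ^ 2)) * ‖deriv g z / y ^ 3‖ := by gcongr
    _ = 16 * ‖deriv g z / y ^ 3‖ * (1 + (‖g z‖ ^ 4) ^ 2) := by ring

theorem sphericalDeriv_mul_le {R : ℝ} {f : ℂ → ℂ} (hf : DifferentiableOn ℂ f (ball 0 R))
    (hf01 : ∀ z ∈ ball (0 : ℂ) R, f z ≠ 0 ∧ f z ≠ 1) {z : ℂ} (hz : z ∈ ball 0 R) :
    sphericalDeriv f z * (R ^ 2 - ‖z‖ ^ 2) ≤ 72 * R := by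
  have hsc : IsSimplyConnected (ball (0 : ℂ) R) := isSimplyConnected_ball (pos_of_mem_ball hz)
  obtain ⟨g, hg, hgf⟩ := exists_differentiableOn_pow_eq_s3 hsc isOpen_ball hf
    (fun w hw => (hf01 w hw).1) four_ne_zero
  obtain ⟨h, hh, hhf⟩ := exists_differentiableOn_pow_eq_s3 hsc isOpen_ball (hf.sub_const 1)
    (fun w hw => sub_ne_zero.2 (hf01 w hw).2) four_ne_zero
  have hgh : ∀ w, g w ^ 4 = h w ^ 4 + 1 := fun w => by rw [hgf, hhf, sub_add_cancel]
  have hh₀ : ∀ w ∈ ball (0 : ℂ) R, h w ≠ 0 := fun w hw hw₀ =>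
    sub_ne_zero.2 (hf01 w hw).2 (by rw [← hhf, hw₀, zero_pow four_ne_zero])
  have hderiv : sphericalDeriv f z ≤ 16 * ‖deriv g z / h z ^ 3‖ :=
    funext hgf ▸ sphericalDeriv_pow_four_le (hg.differentiableAt (isOpen_ball.mem_nhds hz))
      (hh₀ z hz) (hgh z)
  have hfermat := norm_deriv_div_mul_le_of_fermat hg hh hh₀ (fun w _ => hgh w) hz
  have hweight : 0 ≤ R ^ 2 - ‖z‖ ^ 2 :=
    sub_nonneg.2 (pow_le_pow_left₀ (norm_nonneg z) (mem_ball_zero_iff.1 hz).le 2)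
  calc sphericalDeriv f z * (R ^ 2 - ‖z‖ ^ 2)
      ≤ 16 * ‖deriv g z / h z ^ 3‖ * (R ^ 2 - ‖z‖ ^ 2) := by gcongr
    _ ≤ 72 * R := by linarith

lemma sphericalDeriv_le_of_norm_le {R r : ℝ} {f : ℂ → ℂ} (hf : DifferentiableOn ℂ f (ball 0 R))
    (hf01 : ∀ z ∈ ball (0 : ℂ) R, f z ≠ 0 ∧ f z ≠ 1) (hrR : r < R) {z : ℂ} (hz : ‖z‖ ≤ r) :
    sphericalDeriv f z ≤ 72 * R / (R ^ 2 - r ^ 2) := by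
  have hweight : 0 < R ^ 2 - r ^ 2 :=
    sub_pos.2 (pow_lt_pow_left₀ hrR ((norm_nonneg z).trans hz) two_ne_zero)
  have hderiv_nonneg : 0 ≤ sphericalDeriv f z := div_nonneg (norm_nonneg _) (by positivity)
  rw [le_div_iff₀ hweight]
  calc sphericalDeriv f z * (R ^ 2 - r ^ 2) ≤ sphericalDeriv f z * (R ^ 2 - ‖z‖ ^ 2) := by gcongr
    _ ≤ 72 * R := sphericalDeriv_mul_le hf hf01 (mem_ball_zero_iff.2 (hz.trans_lt hrR))

lemma cos_arctan_add_mul_sub_pos {x a b C t : ℝ} (hC : 0 ≤ C)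
    (hpi : arctan x + C * (b - a) < π / 2) (ht : t ∈ Icc a b) :
    0 < cos (arctan x + C * (t - a)) := by
  have hlower : 0 ≤ C * (t - a) := mul_nonneg hC (sub_nonneg.2 ht.1)
  have hupper : C * (t - a) ≤ C * (b - a) := by gcongr; exact ht.2
  refine cos_pos_of_mem_Ioo ⟨?_, ?_⟩
  · linarith [neg_pi_div_two_lt_arctan x]
  · linarith

lemma norm_le_tan_of_norm_deriv_lt {E : Type*} [NormedAddCommGroup E] [NormedSpace ℝ E]
    {γ γ' : ℝ → E} {a b C : ℝ} (hγ : ContinuousOn γ (Icc a b)) (hC : 0 ≤ C)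
    (hγ' : ∀ t ∈ Ico a b, HasDerivWithinAt γ (γ' t) (Ici t) t)
    (hlt : ∀ t ∈ Ico a b, ‖γ' t‖ < C * (1 + ‖γ t‖ ^ 2))
    (hpi : arctan ‖γ a‖ + C * (b - a) < π / 2) {t : ℝ} (ht : t ∈ Icc a b) :
    ‖γ t‖ ≤ tan (arctan ‖γ a‖ + C * (t - a)) := by
  have hcos : ∀ s ∈ Icc a b, cos (arctan ‖γ a‖ + C * (s - a)) ≠ 0 := fun s hs =>
    (cos_arctan_add_mul_sub_pos hC hpi hs).ne'
  have hbound : ∀ s ∈ Icc a b, HasDerivAt (fun s => tan (arctan ‖γ a‖ + C * (s - a)))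
      (C * (1 + tan (arctan ‖γ a‖ + C * (s - a)) ^ 2)) s := by
    intro s hs
    have hlin : HasDerivAt (fun s => arctan ‖γ a‖ + C * (s - a)) C s := by
      simpa using (((hasDerivAt_id s).sub_const a).const_mul C).const_add (arctan ‖γ a‖)
    refine ((hasDerivAt_tan (hcos s hs)).comp s hlin).congr_deriv ?_
    rw [one_div, ← inv_one_add_tan_sq (hcos s hs), inv_inv, mul_comm]
  refine image_norm_le_of_norm_deriv_right_lt_deriv_boundary' hγ hγ' ?_
    (fun s hs => (hbound s hs).continuousAt.continuousWithinAt)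
    (fun s hs => (hbound s (Ico_subset_Icc_self hs)).hasDerivWithinAt) ?_ ht
  · simp only [sub_self, mul_zero, add_zero, tan_arctan, le_refl]
  · intro s hs heq
    rw [← heq]
    exact hlt s hs

lemma norm_le_tan_of_norm_deriv_le {E : Type*} [NormedAddCommGroup E] [NormedSpace ℝ E]
    {γ γ' : ℝ → E} {a b C : ℝ} (hγ : ContinuousOn γ (Icc a b)) (hC : 0 ≤ C)
    (hγ' : ∀ t ∈ Ico a b, HasDerivWithinAt γ (γ' t) (Ici t) t)
    (hle : ∀ t ∈ Ico a b, ‖γ' t‖ ≤ C * (1 + ‖γ t‖ ^ 2))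
    (hpi : arctan ‖γ a‖ + C * (b - a) < π / 2) {t : ℝ} (ht : t ∈ Icc a b) :
    ‖γ t‖ ≤ tan (arctan ‖γ a‖ + C * (t - a)) := by
  have hcos : 0 < cos (arctan ‖γ a‖ + C * (t - a)) := cos_arctan_add_mul_sub_pos hC hpi ht
  have hlin : ∀ s : ℝ, Continuous fun D : ℝ => arctan ‖γ a‖ + D * (s - a) := by fun_prop
  have htan : Tendsto (fun D => tan (arctan ‖γ a‖ + D * (t - a))) (𝓝[>] C)
      (𝓝 (tan (arctan ‖γ a‖ + C * (t - a)))) :=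
    ((continuousAt_tan.2 hcos.ne').tendsto.comp ((hlin t).tendsto C)).mono_left nhdsWithin_le_nhds
  refine ge_of_tendsto htan ?_
  filter_upwards [self_mem_nhdsWithin, nhdsWithin_le_nhds (((hlin b).tendsto C).eventually_lt_const
    hpi)] with D hD hDpi
  have hCD : C < D := hD
  exact norm_le_tan_of_norm_deriv_lt hγ (hC.trans hCD.le) hγ'
    (fun s hs => (hle s hs).trans_lt (by gcongr)) hDpi ht

theorem norm_le_tan_of_sphericalDeriv_le {f : ℂ → ℂ} {C r : ℝ}
    (hf : DifferentiableOn ℂ f (ball 0 r))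
    (hC : ∀ z ∈ ball (0 : ℂ) r, sphericalDeriv f z ≤ C) {z : ℂ} (hz : z ∈ ball 0 r)
    (hpi : arctan ‖f 0‖ + C * ‖z‖ < π / 2) : ‖f z‖ ≤ tan (arctan ‖f 0‖ + C * ‖z‖) := by
  have hmem : ∀ t ∈ Icc (0 : ℝ) 1, (t : ℂ) * z ∈ ball 0 r := fun t ht => by
    rw [mem_ball_zero_iff, norm_mul, Complex.norm_of_nonneg ht.1]
    exact (mul_le_of_le_one_left (norm_nonneg z) ht.2).trans_lt (mem_ball_zero_iff.1 hz)
  have hγ : ∀ t ∈ Icc (0 : ℝ) 1,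
      HasDerivAt (fun t : ℝ => f (t * z)) (deriv f (t * z) * z) t := fun t ht => by
    have hft := (hf.differentiableAt (isOpen_ball.mem_nhds (hmem t ht))).hasDerivAt
    have hline : HasDerivAt (fun w : ℂ => w * z) z (t : ℂ) := hasDerivAt_mul_const z
    exact (hft.comp (t : ℂ) hline).comp_ofReal
  have hC₀ : 0 ≤ C :=
    (div_nonneg (norm_nonneg _) (by positivity)).trans (hC z hz)
  have hle : ∀ t ∈ Icc (0 : ℝ) 1,
      ‖deriv f (t * z) * z‖ ≤ C * ‖z‖ * (1 + ‖f (t * z)‖ ^ 2) := fun t ht => by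
    have hderiv := (div_le_iff₀ (by positivity)).1 (hC _ (hmem t ht))
    calc ‖deriv f (t * z) * z‖ = ‖deriv f (t * z)‖ * ‖z‖ := norm_mul _ _
      _ ≤ C * (1 + ‖f (t * z)‖ ^ 2) * ‖z‖ := by gcongr
      _ = C * ‖z‖ * (1 + ‖f (t * z)‖ ^ 2) := by ring
  have hcurve := norm_le_tan_of_norm_deriv_le (t := 1)
    (fun t ht => (hγ t ht).continuousAt.continuousWithinAt) (mul_nonneg hC₀ (norm_nonneg z))
    (fun t ht => (hγ t (Ico_subset_Icc_self ht)).hasDerivWithinAt)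
    (fun t ht => hle t (Ico_subset_Icc_self ht)) (by simpa using hpi) (right_mem_Icc.2 zero_le_one)
  simpa using hcurve

end SphericalDerivative

end

/-- Quantitative Schottky theorem in the unit disc. -/
theorem schottky_quantitative :
    ∃ L : ℝ, 0 ≤ L ∧
      ∀ f : ℂ → ℂ, DifferentiableOn ℂ f (ball 0 1) →
        (∀ z ∈ ball (0 : ℂ) 1, f z ≠ 0 ∧ f z ≠ 1) →
        ∀ M : ℝ, 0 < M → ‖f 0‖ < M →
        ∀ r : ℝ, 0 ≤ r → r < 1 →
          arctan M + 2 * r * L / (1 - r ^ 2) < π / 2 →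
          ∀ z : ℂ, ‖z‖ < r →
            ‖f z‖ < Real.tan (arctan M + 2 * r * L / (1 - r ^ 2)) := by
  refine ⟨72, by norm_num, fun f hf hf01 M _ hfM r hr₀ hr₁ hpi z hz => ?_⟩
  have hr_sq : 0 < 1 - r ^ 2 := by nlinarith
  have hderiv : ∀ w ∈ ball (0 : ℂ) r, sphericalDeriv f w ≤ 72 / (1 - r ^ 2) := fun w hw => by
    simpa only [one_pow, mul_one] using
      sphericalDeriv_le_of_norm_le hf hf01 hr₁ (mem_ball_zero_iff.1 hw).le
  have hangle : arctan ‖f 0‖ + 72 / (1 - r ^ 2) * ‖z‖ < arctan M + 2 * r * 72 / (1 - r ^ 2) := by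
    refine add_lt_add_of_lt_of_le (arctan_strictMono hfM) ?_
    rw [div_mul_eq_mul_div]
    gcongr ?_ / _
    linarith
  have hlower : -(π / 2) < arctan ‖f 0‖ + 72 / (1 - r ^ 2) * ‖z‖ :=
    (neg_pi_div_two_lt_arctan _).trans_le (le_add_of_nonneg_right (by positivity))
  calc ‖f z‖ ≤ tan (arctan ‖f 0‖ + 72 / (1 - r ^ 2) * ‖z‖) :=
        norm_le_tan_of_sphericalDeriv_le (hf.mono (ball_subset_ball hr₁.le)) hderiv
          (mem_ball_zero_iff.2 hz) (hangle.trans hpi)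
    _ < tan (arctan M + 2 * r * 72 / (1 - r ^ 2)) :=
        tan_lt_tan_of_lt_of_lt_pi_div_two hlower hpi hangle
end
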